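/- arXiv:2402.17885 — 4 statements merged into one kernel-verified Lean document; each statement's English description precedes it below -/
import Mathlib

section
/- Let E be a real inner product space, let X ⊆ E be a nonempty convex set whose diameter is bounded by Δ (i.e., ‖u − v‖ ≤ Δ for all u, v ∈ X), let x ∈ X, g ∈ E and ε > 0. If the distance from g to the set −N_X(x) (the negation of the normal cone to X at x) is at most ε, i.e., infDist(g, {y ∈ E | ∀ z ∈ X, ⟨y, z − x⟩ ≥ 0}) ≤ ε, then for every x' ∈ X one has ⟨x − x', g⟩ ≤ Δ·ε. -/
open RealInnerProductSpace

/-!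
The functional `⟪x - x', ·⟫` is `‖x - x'‖`-Lipschitz, and for `x' ∈ X` it is nonpositive on the
negated normal cone to `X` at `x`. Hence its value at `g` is at most `‖x - x'‖` times the distance
from `g` to that cone.
-/

theorem le_add_mul_infDist_of_lipschitzWith {α : Type*} [PseudoMetricSpace α] {s : Set α}
    {f : α → ℝ} {K : NNReal} {c : ℝ} (hf : LipschitzWith K f) (hs : s.Nonempty)
    (hc : ∀ y ∈ s, f y ≤ c) (x : α) : f x ≤ c + K * Metric.infDist x s := by
  have : Nonempty s := hs.to_subtype
  rw [← sub_le_iff_le_add', Metric.infDist_eq_iInf, Real.mul_iInf_of_nonneg K.coe_nonneg]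
  refine le_ciInf fun y ↦ sub_le_iff_le_add'.2 ?_
  calc
    f x ≤ f y + K * dist x y := hf.le_add_mul x y
    _ ≤ c + K * dist x y := by gcongr; exact hc y y.2

theorem lipschitzWith_inner_right {𝕜 E : Type*} [RCLike 𝕜] [SeminormedAddCommGroup E]
    [InnerProductSpace 𝕜 E] (v : E) : LipschitzWith ‖v‖₊ (inner 𝕜 v) := by
  have hnorm : ‖innerSL 𝕜 v‖₊ = ‖v‖₊ := NNReal.eq (innerSL_apply_norm 𝕜 v)
  exact hnorm ▸ (innerSL 𝕜 v).lipschitz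

section NormalCone

open scoped Pointwise

variable {E : Type*} [SeminormedAddCommGroup E] [InnerProductSpace ℝ E]

/-- The normal cone `N_X(x)` to the set `X` at `x`, defined for an arbitrary set `X` and without
requiring `x ∈ X`. -/
def normalCone (X : Set E) (x : E) : Set E :=
  {g | ∀ y ∈ X, ⟪g, y - x⟫ ≤ 0}

theorem neg_normalCone (X : Set E) (x : E) :
    -normalCone X x = {y | ∀ z ∈ X, 0 ≤ ⟪y, z - x⟫} := by
  simp only [normalCone, Set.neg_ofPred, inner_neg_left, neg_nonpos]

theorem zero_mem_normalCone (X : Set E) (x : E) : 0 ∈ normalCone X x :=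
  fun _ _ ↦ (inner_zero_left _).le

theorem inner_sub_nonpos_of_mem_neg_normalCone {X : Set E} {x x' y : E} (hx' : x' ∈ X)
    (hy : y ∈ -normalCone X x) : ⟪x - x', y⟫ ≤ 0 := by
  rw [neg_normalCone] at hy
  rw [← neg_sub x' x, inner_neg_left, neg_nonpos, real_inner_comm]
  exact hy x' hx'

theorem stmt_0_general {X : Set E} {x' : E} (hx' : x' ∈ X) (x g : E) :
    ⟪x - x', g⟫ ≤ ‖x - x'‖ * Metric.infDist g (-normalCone X x) := by
  have hne : (-normalCone X x).Nonempty := Set.Nonempty.neg ⟨0, zero_mem_normalCone X x⟩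
  simpa only [zero_add, coe_nnnorm] using
    le_add_mul_infDist_of_lipschitzWith (lipschitzWith_inner_right (𝕜 := ℝ) (x - x')) hne
      (fun _ hy ↦ inner_sub_nonpos_of_mem_neg_normalCone hx' hy) g

end NormalCone

/-- If the distance from `g` to the negated normal cone of `X` at `x` is at most `ε`,
then `⟪x - x', g⟫ ≤ Δ * ε` for every `x' ∈ X`, where `Δ` bounds the diameter of `X`. -/
theorem stmt_0 {E : Type*} [NormedAddCommGroup E] [InnerProductSpace ℝ E]
    (X : Set E) (hX : X.Nonempty) (hXconv : Convex ℝ X) (Δ : ℝ)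
    (hdiam : ∀ u ∈ X, ∀ v ∈ X, ‖u - v‖ ≤ Δ)
    (x : E) (hx : x ∈ X) (g : E) (ε : ℝ) (hε : 0 < ε)
    (hdist : Metric.infDist g {y : E | ∀ z ∈ X, 0 ≤ ⟪y, z - x⟫} ≤ ε) :
    ∀ x' ∈ X, ⟪x - x', g⟫ ≤ Δ * ε := by
  intro x' hx'
  rw [← neg_normalCone] at hdist
  exact (stmt_0_general hx' x g).trans <|
    mul_le_mul (hdiam x hx x' hx') hdist Metric.infDist_nonneg
      ((norm_nonneg _).trans (hdiam x hx x' hx'))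
end

section
/- Let E be a real inner product space, X ⊆ E a nonempty convex set, f : E → ℝ, and let x, u ∈ X, g ∈ E, μ > 0, ν > 0. Assume the strong-convexity subgradient inequality at x: for every y ∈ X, f(y) ≥ f(x) + ⟨g, y − x⟩ + (μ/2)·‖y − x‖². Let x⁺ ∈ X satisfy the variational characterization of the projection of x − ν·g onto X, namely ⟨(x − ν·g) − x⁺, y − x⁺⟩ ≤ 0 for all y ∈ X. Then ‖x⁺ − u‖² ≤ (1 − ν·μ)·‖x − u‖² − 2ν·(f(x) − f(u)) + ν²·‖g‖². -/
open RealInnerProductSpace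

section

variable {E : Type*} [SeminormedAddCommGroup E] [InnerProductSpace ℝ E]

theorem norm_sub_sq_add_norm_sub_sq_le_of_inner_nonpos {a b c : E}
    (h : ⟪a - b, c - b⟫ ≤ 0) :
    ‖a - b‖ ^ 2 + ‖b - c‖ ^ 2 ≤ ‖a - c‖ ^ 2 := by
  have law_of_cosines :
      ‖a - c‖ ^ 2 = ‖a - b‖ ^ 2 - 2 * ⟪a - b, c - b⟫ + ‖b - c‖ ^ 2 := by
    rw [norm_sub_rev b c, ← norm_sub_sq_real, sub_sub_sub_cancel_right]
  linarith

theorem norm_sub_smul_sub_sq (x g u : E) (ν : ℝ) :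
    ‖x - ν • g - u‖ ^ 2 = ‖x - u‖ ^ 2 + 2 * ν * ⟪g, u - x⟫ + ν ^ 2 * ‖g‖ ^ 2 := by
  have inner_flip : ⟪x - u, g⟫ = -⟪g, u - x⟫ := by
    rw [real_inner_comm, ← inner_neg_right, neg_sub]
  rw [sub_right_comm, norm_sub_sq_real, real_inner_smul_right, inner_flip, norm_smul, mul_pow,
    Real.norm_eq_abs, sq_abs]
  ring

theorem stmt_3_general {f : E → ℝ} {x u g xp : E} {μ ν : ℝ} (hν : 0 ≤ ν)
    (hsc : f x + ⟪g, u - x⟫ + μ / 2 * ‖u - x‖ ^ 2 ≤ f u)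
    (hproj : ⟪(x - ν • g) - xp, u - xp⟫ ≤ 0) :
    ‖xp - u‖ ^ 2 ≤ (1 - ν * μ) * ‖x - u‖ ^ 2 - 2 * ν * (f x - f u) + ν ^ 2 * ‖g‖ ^ 2 := by
  have inner_le : ⟪g, u - x⟫ ≤ f u - f x - μ / 2 * ‖x - u‖ ^ 2 := by
    rw [norm_sub_rev x u]
    linarith
  calc
    ‖xp - u‖ ^ 2 ≤ ‖x - ν • g - xp‖ ^ 2 + ‖xp - u‖ ^ 2 := le_add_of_nonneg_left (sq_nonneg _)
    _ ≤ ‖x - ν • g - u‖ ^ 2 := norm_sub_sq_add_norm_sub_sq_le_of_inner_nonpos hproj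
    _ = ‖x - u‖ ^ 2 + 2 * ν * ⟪g, u - x⟫ + ν ^ 2 * ‖g‖ ^ 2 := norm_sub_smul_sub_sq x g u ν
    _ ≤ ‖x - u‖ ^ 2 + 2 * ν * (f u - f x - μ / 2 * ‖x - u‖ ^ 2) + ν ^ 2 * ‖g‖ ^ 2 := by gcongr
    _ = (1 - ν * μ) * ‖x - u‖ ^ 2 - 2 * ν * (f x - f u) + ν ^ 2 * ‖g‖ ^ 2 := by ring

end

/-- One-step inequality for a projected subgradient step on a `μ`-strongly convex
function over a convex set. -/
theorem stmt_3 {E : Type*} [NormedAddCommGroup E] [InnerProductSpace ℝ E]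
    (X : Set E) (hXne : X.Nonempty) (hXconv : Convex ℝ X)
    (f : E → ℝ) (x u : E) (hx : x ∈ X) (hu : u ∈ X)
    (g : E) (μ ν : ℝ) (hμ : 0 < μ) (hν : 0 < ν)
    (hsc : ∀ y ∈ X, f x + ⟪g, y - x⟫ + μ / 2 * ‖y - x‖ ^ 2 ≤ f y)
    (xp : E) (hxp : xp ∈ X)
    (hproj : ∀ y ∈ X, ⟪(x - ν • g) - xp, y - xp⟫ ≤ 0) :
    ‖xp - u‖ ^ 2 ≤ (1 - ν * μ) * ‖x - u‖ ^ 2 - 2 * ν * (f x - f u) + ν ^ 2 * ‖g‖ ^ 2 :=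
  stmt_3_general hν.le (hsc u hu) (hproj u hu)
end

section
/- Let I be a nonempty finite set with |I| = n ≥ 1, let B ⊆ I and M := I \ B. Let ρ, δ : I → ℝ be nonnegative, let g, F : I → ℝ, and let c ≥ 0 and R ∈ ℝ. Assume: (i) ∑_{k ∈ M} ρ(k)·g(k) + ∑_{k ∈ B} ρ(k)·F(k) ≤ R; (ii) for every k ∈ M, g(k) ≥ δ(k) − c; and (iii) for every k ∈ M, (n/2)·ρ(k)·δ(k) > R + c·∑_{j ∈ M} ρ(j). Then either 2·|B| ≥ n, or ∑_{k ∈ B} ρ(k)·F(k) ≤ 0. -/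
/-!
If fewer than half of the iterations are objective steps, then at least `n / 2` of them are
constraint steps. Each of these has `n / 2 * (ρ k * δ k)` at or above the threshold
`R + c * ∑ j ∈ M, ρ j`, so `∑ k ∈ M, ρ k * δ k` is at least that threshold too. Since `g` falls
short of `δ` by at most `c`, the constraint steps alone contribute at least `R` to a weighted sum
bounded by `R`, and nothing positive is left for the objective steps.
-/

theorem le_sum_of_le_card_of_forall_le_mul {ι 𝕜 : Type*} [Semiring 𝕜] [LinearOrder 𝕜]
    [IsStrictOrderedRing 𝕜] {s : Finset ι} {f : ι → 𝕜} {a r : 𝕜} (hr : 0 < r)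
    (hrs : r ≤ s.card) (hf : ∀ k ∈ s, 0 ≤ f k) (ha : ∀ k ∈ s, a ≤ r * f k) :
    a ≤ ∑ k ∈ s, f k := by
  rcases le_total a 0 with ha₀ | ha₀
  · exact ha₀.trans (Finset.sum_nonneg hf)
  · refine le_of_mul_le_mul_left ?_ hr
    calc
      r * a ≤ s.card * a := mul_le_mul_of_nonneg_right hrs ha₀
      _ = s.card • a := (nsmul_eq_mul _ _).symm
      _ ≤ ∑ k ∈ s, r * f k := Finset.card_nsmul_le_sum s _ a ha
      _ = r * ∑ k ∈ s, f k := (Finset.mul_sum ..).symm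

theorem sum_mul_sub_mul_sum_le_sum_mul {ι 𝕜 : Type*} [CommRing 𝕜] [PartialOrder 𝕜]
    [IsOrderedRing 𝕜] {s : Finset ι} {ρ δ g : ι → 𝕜} {c : 𝕜} (hρ : ∀ k ∈ s, 0 ≤ ρ k)
    (hg : ∀ k ∈ s, δ k - c ≤ g k) :
    ∑ k ∈ s, ρ k * δ k - c * ∑ k ∈ s, ρ k ≤ ∑ k ∈ s, ρ k * g k :=
  calc
    ∑ k ∈ s, ρ k * δ k - c * ∑ k ∈ s, ρ k = ∑ k ∈ s, ρ k * (δ k - c) := by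
      simp only [mul_sub, Finset.sum_sub_distrib, ← Finset.sum_mul, mul_comm c]
    _ ≤ ∑ k ∈ s, ρ k * g k :=
      Finset.sum_le_sum fun k hk => mul_le_mul_of_nonneg_left (hg k hk) (hρ k hk)

theorem stmt_4_general {ι 𝕜 : Type*} [Field 𝕜] [LinearOrder 𝕜] [IsStrictOrderedRing 𝕜]
    {n : ℕ} {M B : Finset ι} (hn : n ≤ M.card + B.card) {ρ δ g F : ι → 𝕜} {c R : 𝕜}
    (hρ : ∀ k ∈ M, 0 ≤ ρ k) (hδ : ∀ k ∈ M, 0 ≤ δ k)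
    (hR : ∑ k ∈ M, ρ k * g k + ∑ k ∈ B, ρ k * F k ≤ R)
    (hg : ∀ k ∈ M, δ k - c ≤ g k)
    (hthreshold : ∀ k ∈ M, R + c * ∑ j ∈ M, ρ j ≤ (n : 𝕜) / 2 * (ρ k * δ k)) :
    n ≤ 2 * B.card ∨ ∑ k ∈ B, ρ k * F k ≤ 0 := by
  refine or_iff_not_imp_left.2 fun hB => ?_
  have half_n_pos : (0 : 𝕜) < n / 2 := half_pos (Nat.cast_pos.2 (by omega))
  have half_n_le_card : (n : 𝕜) / 2 ≤ M.card := by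
    rw [div_le_iff₀ two_pos]
    exact_mod_cast (by omega : n ≤ M.card * 2)
  have threshold_le : R + c * ∑ j ∈ M, ρ j ≤ ∑ k ∈ M, ρ k * δ k :=
    le_sum_of_le_card_of_forall_le_mul half_n_pos half_n_le_card
      (fun k hk => mul_nonneg (hρ k hk) (hδ k hk)) hthreshold
  have budget_le : R ≤ ∑ k ∈ M, ρ k * g k :=
    (le_sub_iff_add_le.2 threshold_le).trans (sum_mul_sub_mul_sum_le_sum_mul hρ hg)
  linarith

/-- Deterministic dichotomy underlying the analysis of the switching-gradient (CSA)
subroutine: either at least half of the iterations take objective steps, or the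
weighted sum of objective optimality gaps over the objective steps is nonpositive. -/
theorem stmt_4 {ι : Type*} [DecidableEq ι] (I : Finset ι) (hIne : I.Nonempty)
    (n : ℕ) (hn : n = I.card) (hn1 : 1 ≤ n)
    (B : Finset ι) (hB : B ⊆ I) (M : Finset ι) (hM : M = I \ B)
    (ρ δ : ι → ℝ) (hρ : ∀ k, 0 ≤ ρ k) (hδ : ∀ k, 0 ≤ δ k)
    (g F : ι → ℝ) (c : ℝ) (hc : 0 ≤ c) (R : ℝ)
    (hi : ∑ k ∈ M, ρ k * g k + ∑ k ∈ B, ρ k * F k ≤ R)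
    (hii : ∀ k ∈ M, δ k - c ≤ g k)
    (hiii : ∀ k ∈ M, R + c * ∑ j ∈ M, ρ j < (n : ℝ) / 2 * (ρ k * δ k)) :
    n ≤ 2 * B.card ∨ ∑ k ∈ B, ρ k * F k ≤ 0 :=
  stmt_4_general (hn ▸ hM ▸ Finset.card_le_card_sdiff_add_card) (fun k _ => hρ k)
    (fun k _ => hδ k) hi hii fun k hk => (hiii k hk).le
end

section
/- Let ι be a nonempty finite index type, for each i ∈ ι let Eᵢ be a real normed vector space, and equip the product ∏_{i} Eᵢ with the ℓ² product norm ‖x‖ = (∑_i ‖x_i‖²)^{1/2}. Let L : ι → ℝ be nonnegative and let f : (∏_i Eᵢ) → ℝ satisfy the coordinatewise Lipschitz condition: for every i ∈ ι, every x ∈ ∏_i Eᵢ, and every yᵢ ∈ Eᵢ, |f(update(x, i, yᵢ)) − f(x)| ≤ L(i)·‖yᵢ − x_i‖, where update(x, i, yᵢ) replaces the i-th coordinate of x by yᵢ. Then f is Lipschitz on the product: for all x, y ∈ ∏_i Eᵢ, |f(x) − f(y)| ≤ (∑_i L(i)²)^{1/2} · ‖x − y‖. -/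
/-!
Changing the coordinates of `y` into those of `x` one at a time, the triangle inequality bounds
the distance from `f x` to `f y` by the sum of the one-coordinate bounds, an `ℓ¹` estimate. The
Cauchy–Schwarz inequality turns it into the `ℓ²` estimate.
-/

section UpdateBound

variable {ι : Type*} [DecidableEq ι] {X : ι → Type*} {Y : Type*} [PseudoMetricSpace Y]
  {f : (∀ i, X i) → Y} {c : ∀ i, X i → X i → ℝ}

theorem dist_piecewise_le_sum_of_dist_update_le
    (hf : ∀ i x a, dist (f (Function.update x i a)) (f x) ≤ c i a (x i))
    (s : Finset ι) (x y : ∀ i, X i) :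
    dist (f (s.piecewise x y)) (f y) ≤ ∑ i ∈ s, c i (x i) (y i) := by
  induction s using Finset.induction_on with
  | empty => simp
  | insert i s hi ih =>
    have hstep : dist (f (Function.update (s.piecewise x y) i (x i))) (f (s.piecewise x y)) ≤
        c i (x i) (y i) := by
      simpa only [Finset.piecewise_eq_of_notMem s x y hi] using hf i (s.piecewise x y) (x i)
    rw [Finset.piecewise_insert, Finset.sum_insert hi]
    exact (dist_triangle _ (f (s.piecewise x y)) _).trans (add_le_add hstep ih)

theorem dist_le_sum_of_dist_update_le [Fintype ι]
    (hf : ∀ i x a, dist (f (Function.update x i a)) (f x) ≤ c i a (x i)) (x y : ∀ i, X i) :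
    dist (f x) (f y) ≤ ∑ i, c i (x i) (y i) := by
  simpa only [Finset.piecewise_univ] using
    dist_piecewise_le_sum_of_dist_update_le hf Finset.univ x y

end UpdateBound

theorem stmt_7_general {ι : Type*} [Fintype ι] [DecidableEq ι]
    {X : ι → Type*} [∀ i, PseudoMetricSpace (X i)] {Y : Type*} [PseudoMetricSpace Y]
    (L : ι → ℝ) (f : (∀ i, X i) → Y)
    (hf : ∀ i x a, dist (f (Function.update x i a)) (f x) ≤ L i * dist a (x i))
    (x y : ∀ i, X i) :
    dist (f x) (f y) ≤ √(∑ i, L i ^ 2) * √(∑ i, dist (x i) (y i) ^ 2) :=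
  calc
    dist (f x) (f y) ≤ ∑ i, L i * dist (x i) (y i) :=
      dist_le_sum_of_dist_update_le (c := fun i a b ↦ L i * dist a b) hf x y
    _ ≤ √(∑ i, L i ^ 2) * √(∑ i, dist (x i) (y i) ^ 2) :=
      Real.sum_mul_le_sqrt_mul_sqrt _ _ _

/-- A function on a finite product of normed spaces that is `L i`-Lipschitz in each
coordinate separately is `√(∑ i, L i ^ 2)`-Lipschitz with respect to the ℓ²
product norm. -/
theorem stmt_7 {ι : Type*} [Fintype ι] [Nonempty ι] [DecidableEq ι]
    {E : ι → Type*} [∀ i, NormedAddCommGroup (E i)] [∀ i, NormedSpace ℝ (E i)]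
    (L : ι → ℝ) (hL : ∀ i, 0 ≤ L i)
    (f : (∀ i, E i) → ℝ)
    (hcoord : ∀ (i : ι) (x : ∀ i, E i) (y : E i),
      |f (Function.update x i y) - f x| ≤ L i * ‖y - x i‖) :
    ∀ x y : ∀ i, E i,
      |f x - f y| ≤ Real.sqrt (∑ i, L i ^ 2) * Real.sqrt (∑ i, ‖x i - y i‖ ^ 2) := by
  simp only [← Real.dist_eq, ← dist_eq_norm] at hcoord ⊢
  exact stmt_7_general L f hcoord
end
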